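/- Under the anchored Popov method with β_k = 1/(k+2), the parameter update η_{k+1} = (1−β_k²−Mη_k²)β_{k+1}η_k/((1−Mη_k²)(1−β_k)β_k), M = 4L², 0 < η_0 ≤ 1/(2L√3), and y_{−1} = x_0, the iterates of the scheme y_k = β_k x_0 + (1−β_k)x_k − η_k G(y_{k−1}), x_{k+1} = β_k x_0 + (1−β_k)x_k − η_k G(y_k) applied to a monotone L-Lipschitz G with zero x⋆ satisfy ‖G(x_k)‖² + 2L²‖x_k − y_{k−1}‖² ≤ (4/(η⋆(k+1)(k+2)))[η_0‖G(x_0)‖² + (1/η⋆)‖x_0 − x⋆‖²], where η⋆ = lim η_k > 0. -/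

import Mathlib

open Filter Topology
open scoped InnerProductSpace

/-- The parameter sequence is positive, nonincreasing, and bounded below. -/
lemma eta_facts (L : ℝ) (hL : 0 < L) (M : ℝ) (hM : M = 4 * L ^ 2)
    (η : ℕ → ℝ) (hη0 : 0 < η 0) (hη0' : η 0 ≤ 1 / (2 * L * Real.sqrt 3))
    (hrec : ∀ k : ℕ,
      η (k + 1) =
        (1 - (1 / ((k : ℝ) + 2)) ^ 2 - M * η k ^ 2) * (1 / ((k : ℝ) + 3)) * η k /
          ((1 - M * η k ^ 2) * (1 - 1 / ((k : ℝ) + 2)) * (1 / ((k : ℝ) + 2)))) :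
    (∀ k, M * η k ^ 2 ≤ 1 / 3) ∧ (∀ k, 5 / 8 * η 0 ≤ η k) ∧ (∀ k, η (k + 1) ≤ η k) ∧
    (∀ k : ℕ, η (k + 1) = η k * (1 - M * η k ^ 2 / (1 - M * η k ^ 2) /
      (((k : ℝ) + 1) * ((k : ℝ) + 3)))) := by
  have hMpos : 0 < M := by rw [hM]; positivity
  have h0 : M * η 0 ^ 2 ≤ 1 / 3 := by
    have h1 : η 0 ^ 2 ≤ (1 / (2 * L * Real.sqrt 3)) ^ 2 := by gcongr
    have h2 : (1 / (2 * L * Real.sqrt 3)) ^ 2 = 1 / (12 * L ^ 2) := by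
      rw [div_pow, mul_pow, Real.sq_sqrt (by norm_num)]; ring
    rw [h2] at h1
    calc M * η 0 ^ 2 ≤ M * (1 / (12 * L ^ 2)) := by gcongr
      _ = 1 / 3 := by rw [hM]; field_simp; norm_num
  have hrec' : ∀ k : ℕ, M * η k ^ 2 ≤ 1 / 3 →
      η (k + 1) = η k * (1 - M * η k ^ 2 / (1 - M * η k ^ 2) /
      (((k : ℝ) + 1) * ((k : ℝ) + 3))) := by
    intro k hk
    rw [hrec k]
    generalize M * η k ^ 2 = m at hk ⊢
    have hm : 1 - m ≠ 0 := by linarith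
    have hk0 : (0 : ℝ) ≤ k := Nat.cast_nonneg k
    have e1 : (1 : ℝ) - 1 / ((k : ℝ) + 2) = (k + 1) / (k + 2) := by field_simp; ring
    rw [e1]
    have : (k : ℝ) + 1 ≠ 0 := by positivity
    have : (k : ℝ) + 2 ≠ 0 := by positivity
    have : (k : ℝ) + 3 ≠ 0 := by positivity
    field_simp
    ring
  have key : ∀ k : ℕ, M * η k ^ 2 ≤ 1 / 3 ∧ η k ≤ η 0 ∧
      η 0 * (5 / 8 + 1 / 4 * (1 / ((k : ℝ) + 1) + 1 / ((k : ℝ) + 2))) ≤ η k := by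
    intro k
    induction k with
    | zero => refine ⟨h0, le_rfl, ?_⟩; norm_num
    | succ k ih =>
      obtain ⟨h1, h2, h3⟩ := ih
      have hpos : 0 < η k := lt_of_lt_of_le (by positivity) h3
      have hr := hrec' k h1
      have hm0 : 0 ≤ M * η k ^ 2 := by positivity
      have hd0 : 0 ≤ M * η k ^ 2 / (1 - M * η k ^ 2) := div_nonneg hm0 (by linarith)
      have hd1 : M * η k ^ 2 / (1 - M * η k ^ 2) ≤ 1 / 2 := by
        rw [div_le_div_iff₀ (by linarith) (by norm_num)]; linarith
      generalize M * η k ^ 2 / (1 - M * η k ^ 2) = d at hr hd0 hd1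
      have hc : (0 : ℝ) < 1 / (((k : ℝ) + 1) * ((k : ℝ) + 3)) := by positivity
      have hr2 : η (k + 1) = η k - η k * d * (1 / (((k : ℝ) + 1) * ((k : ℝ) + 3))) := by
        rw [hr]; ring
      have hle : η (k + 1) ≤ η k := by
        rw [hr2]
        have : 0 ≤ η k * d * (1 / (((k : ℝ) + 1) * ((k : ℝ) + 3))) := by positivity
        linarith
      have hlow : η 0 * (5 / 8 + 1 / 4 * (1 / (((k + 1 : ℕ) : ℝ) + 1)
          + 1 / (((k + 1 : ℕ) : ℝ) + 2))) ≤ η (k + 1) := by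
        have h4 : η k * d * (1 / (((k : ℝ) + 1) * ((k : ℝ) + 3))) ≤
            η 0 * (1 / 2) * (1 / (((k : ℝ) + 1) * ((k : ℝ) + 3))) := by gcongr
        have e : η 0 * (5 / 8 + 1 / 4 * (1 / (((k + 1 : ℕ) : ℝ) + 1)
          + 1 / (((k + 1 : ℕ) : ℝ) + 2))) =
          η 0 * (5 / 8 + 1 / 4 * (1 / ((k : ℝ) + 1) + 1 / ((k : ℝ) + 2))) -
            η 0 * (1 / 2) * (1 / (((k : ℝ) + 1) * ((k : ℝ) + 3))) := by
          push_cast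
          have e2 : (k : ℝ) + 1 + 1 = k + 2 := by ring
          have e3 : (k : ℝ) + 1 + 2 = k + 3 := by ring
          rw [e2, e3]
          field_simp
          ring
        rw [e, hr2]; linarith
      have hpos' : 0 < η (k + 1) := lt_of_lt_of_le (by positivity) hlow
      refine ⟨le_trans ?_ h1, hle.trans h2, hlow⟩
      gcongr
  refine ⟨fun k => (key k).1, fun k => ?_, fun k => ?_, fun k => hrec' k (key k).1⟩
  · refine le_trans ?_ (key k).2.2
    have : 0 ≤ η 0 * (1 / 4 * (1 / ((k : ℝ) + 1) + 1 / ((k : ℝ) + 2))) := by positivity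
    linarith
  · have hpos : 0 < η k := lt_of_lt_of_le (by positivity) (key k).2.2
    rw [hrec' k (key k).1]
    have hm := (key k).1
    have : 0 ≤ M * η k ^ 2 / (1 - M * η k ^ 2) / (((k : ℝ) + 1) * ((k : ℝ) + 3)) :=
      div_nonneg (div_nonneg (by positivity) (by linarith)) (by positivity)
    nlinarith

/-- The quadratic form estimate behind the descent of the Lyapunov function. -/
lemma quad_step {E : Type*} [NormedAddCommGroup E] [InnerProductSpace ℝ E]
    (u w U v : E) (X m e r : ℝ) (hm0 : 0 < m) (hm : m ≤ 1 / 3) (he0 : 0 ≤ e) (he : e ≤ 1)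
    (hr : r = 1 + 2 * e - e ^ 2 * (m / (1 - m)))
    (hX : ‖u - v‖ ^ 2 ≤ X) (hU : ‖U - w‖ ^ 2 ≤ m / 4 * ‖v - w‖ ^ 2) :
    0 ≤ ‖u‖ ^ 2 - r * ‖U‖ ^ 2 + 2 * ((1 + e) * ⟪U, w⟫_ℝ - ⟪u, w⟫_ℝ) + X
      - r * (m / 4 * ‖v - w‖ ^ 2) := by
  have hpar : ‖v - w‖ ^ 2 ≤ 2 * ‖u - v‖ ^ 2 + 2 * ‖u - w‖ ^ 2 := by
    have h1 : v - w = (u - w) - (u - v) := by abel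
    have h2 := parallelogram_law_with_norm ℝ (u - w) (u - v)
    rw [← h1] at h2
    nlinarith [mul_self_nonneg ‖u - w + (u - v)‖]
  have hw := norm_sub_sq_real u w
  have hUw := norm_sub_sq_real U w
  have hd0 : 0 ≤ m / (1 - m) := div_nonneg hm0.le (by linarith)
  have hr3 : r ≤ 3 := by rw [hr]; nlinarith [mul_nonneg (sq_nonneg e) hd0]
  have hs : 6 ≤ 2 / m := by rw [le_div_iff₀ hm0]; linarith
  have hsm : 2 / m * m = 2 := by field_simp
  have hD : (2 / m - r) * ‖U - w‖ ^ 2 ≤ (1 / 2 - r * (m / 4)) * ‖v - w‖ ^ 2 := by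
    calc _ ≤ (2 / m - r) * (m / 4 * ‖v - w‖ ^ 2) := by
          apply mul_le_mul_of_nonneg_left hU; linarith
      _ = _ := by field_simp; ring
  have hdet : (1 + e - 2 / m + r) ^ 2 ≤ (2 / m - r - 1) * (2 / m - 2 * r) := by
    have : (2 / m - r - 1) * (2 / m - 2 * r) - (1 + e - 2 / m + r) ^ 2
        = (e - e ^ 2 * (m / (1 - m))) ^ 2 := by
      have : 1 - m ≠ 0 := by linarith
      rw [hr]; field_simp; ring
    nlinarith [sq_nonneg (e - e ^ 2 * (m / (1 - m)))]
  have hq : 0 ≤ (2 / m - r - 1) * ‖w‖ ^ 2 + (2 / m - 2 * r) * ‖U‖ ^ 2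
      + 2 * (1 + e - 2 / m + r) * ⟪U, w⟫_ℝ := by
    generalize hC3 : 1 + e - 2 / m + r = C3 at hdet
    generalize hC2 : 2 / m - 2 * r = C2 at hdet
    have hC1p : 0 < 2 / m - r - 1 := by linarith
    generalize hC1 : 2 / m - r - 1 = C1 at hdet hC1p
    have h := norm_add_sq_real (C1 • w) (C3 • U)
    rw [norm_smul, norm_smul, mul_pow, mul_pow, Real.norm_eq_abs, Real.norm_eq_abs, sq_abs,
      sq_abs, real_inner_smul_left, real_inner_smul_right, real_inner_comm] at h
    have h' := sq_nonneg ‖C1 • w + C3 • U‖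
    have h'' := mul_le_mul_of_nonneg_right hdet (sq_nonneg ‖U‖)
    refine nonneg_of_mul_nonneg_right (a := C1) ?_ hC1p
    nlinarith
  nlinarith

/-- Convergence rate of the anchored Popov method (Theorem 3.3): with `β_k = 1/(k+2)`,
`M = 4L²`, `0 < η_0 ≤ 1/(2L√3)`, the iterates satisfy
`‖G(x_k)‖² + 2L²‖x_k − y_{k−1}‖² ≤ (4/(η⋆(k+1)(k+2)))[η_0‖G(x_0)‖² + ‖x_0 − x⋆‖²/η⋆]`,
where `η⋆ = lim η_k > 0`.  Here `y (k+1)` is the paper's `y_k` and `y 0 = x 0`. -/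
theorem anchored_popov_convergence {p : ℕ}
    (G : EuclideanSpace ℝ (Fin p) → EuclideanSpace ℝ (Fin p))
    (L : ℝ) (hL : 0 < L)
    (hmono : ∀ x y, 0 ≤ ⟪G x - G y, x - y⟫_ℝ)
    (hLip : ∀ x y, ‖G x - G y‖ ≤ L * ‖x - y‖)
    (xstar : EuclideanSpace ℝ (Fin p)) (hstar : G xstar = 0)
    (M : ℝ) (hM : M = 4 * L ^ 2)
    (η : ℕ → ℝ) (hη0 : 0 < η 0) (hη0' : η 0 ≤ 1 / (2 * L * Real.sqrt 3))
    (hrec : ∀ k : ℕ,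
      η (k + 1) =
        (1 - (1 / ((k : ℝ) + 2)) ^ 2 - M * η k ^ 2) * (1 / ((k : ℝ) + 3)) * η k /
          ((1 - M * η k ^ 2) * (1 - 1 / ((k : ℝ) + 2)) * (1 / ((k : ℝ) + 2))))
    (x y : ℕ → EuclideanSpace ℝ (Fin p))
    (hy0 : y 0 = x 0)
    (hy : ∀ k : ℕ, y (k + 1) =
      (1 / ((k : ℝ) + 2)) • x 0 + (1 - 1 / ((k : ℝ) + 2)) • x k - η k • G (y k))
    (hx : ∀ k : ℕ, x (k + 1) =
      (1 / ((k : ℝ) + 2)) • x 0 + (1 - 1 / ((k : ℝ) + 2)) • x k - η k • G (y (k + 1))) :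
    ∃ ηs : ℝ, 0 < ηs ∧ Tendsto η atTop (𝓝 ηs) ∧
      ∀ k : ℕ,
        ‖G (x k)‖ ^ 2 + 2 * L ^ 2 * ‖x k - y k‖ ^ 2 ≤
          4 / (ηs * ((k : ℝ) + 1) * ((k : ℝ) + 2)) *
            (η 0 * ‖G (x 0)‖ ^ 2 + (1 / ηs) * ‖x 0 - xstar‖ ^ 2) := by
  obtain ⟨hm, hlow, hanti, hrec'⟩ := eta_facts L hL M hM η hη0 hη0' hrec
  have hA : Antitone η := antitone_nat_of_succ_le hanti
  have hbdd : BddBelow (Set.range η) := ⟨5 / 8 * η 0, by rintro _ ⟨k, rfl⟩; exact hlow k⟩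
  have hlim := tendsto_atTop_ciInf hA hbdd
  have hle : ∀ k, (⨅ i, η i) ≤ η k := fun k => ciInf_le hbdd k
  have hpos : 0 < ⨅ i, η i := lt_of_lt_of_le (by positivity : 0 < 5 / 8 * η 0) (le_ciInf hlow)
  generalize (⨅ i, η i) = s at hlim hle hpos
  refine ⟨s, hpos, hlim, ?_⟩
  have hηpos : ∀ k, 0 < η k := fun k => hpos.trans_le (hle k)
  -- the Lyapunov function is bounded by its initial value
  have hV : ∀ k : ℕ, ((k : ℝ) + 1) * ((k : ℝ) + 2) * η k / 2 *
      (‖G (x k)‖ ^ 2 + L ^ 2 * ‖x k - y k‖ ^ 2) + ((k : ℝ) + 1) * ⟪G (x k), x k - x 0⟫_ℝ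
      ≤ η 0 * ‖G (x 0)‖ ^ 2 := by
    intro k
    induction k with
    | zero => simp [hy0]
    | succ k ih =>
      refine le_trans ?_ ih
      have hk0 : (0 : ℝ) ≤ k := Nat.cast_nonneg k
      have hxy : x (k + 1) - y (k + 1) = η k • (G (y k) - G (y (k + 1))) := by
        rw [hx, hy, smul_sub]; abel
      have hxyn : ‖x (k + 1) - y (k + 1)‖ ^ 2 = η k ^ 2 * ‖G (y k) - G (y (k + 1))‖ ^ 2 := by
        rw [hxy, norm_smul, mul_pow, Real.norm_eq_abs, sq_abs]
      have hsq : ∀ a b, ‖G a - G b‖ ^ 2 ≤ L ^ 2 * ‖a - b‖ ^ 2 := by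
        intro a b
        rw [← mul_pow]
        exact pow_le_pow_left₀ (norm_nonneg _) (hLip a b) 2
      have hX := hsq (x k) (y k)
      have hU := hsq (x (k + 1)) (y (k + 1))
      have hmL : M * η k ^ 2 / 4 = L ^ 2 * η k ^ 2 := by rw [hM]; ring
      rw [hxyn, ← mul_assoc, ← hmL] at hU
      have hMpos : 0 < M := by rw [hM]; positivity
      have hηk := hηpos k
      obtain ⟨r, hr⟩ : ∃ r, r = 1 + 2 * (1 / ((k : ℝ) + 1)) - (1 / ((k : ℝ) + 1)) ^ 2 *
        (M * η k ^ 2 / (1 - M * η k ^ 2)) := ⟨_, rfl⟩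
      have hq := quad_step (G (x k)) (G (y (k + 1))) (G (x (k + 1))) (G (y k)) _
        (M * η k ^ 2) (1 / ((k : ℝ) + 1)) r (by positivity) (hm k) (by positivity)
        (by rw [div_le_one (by positivity)]; linarith) hr hX hU
      have ha : (((k + 1 : ℕ) : ℝ) + 1) * (((k + 1 : ℕ) : ℝ) + 2) * η (k + 1) / 2 =
          ((k : ℝ) + 1) * ((k : ℝ) + 2) * η k / 2 * r := by
        rw [hrec' k, hr]
        generalize M * η k ^ 2 / (1 - M * η k ^ 2) = d
        push_cast
        field_simp
        ring
      have hmo := hmono (x (k + 1)) (x k)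
      have hd : x (k + 1) - x k =
          (-(1 / ((k : ℝ) + 2))) • (x k - x 0) - η k • G (y (k + 1)) := by
        rw [hx]; module
      have hd0 : x (k + 1) - x 0 =
          (1 - 1 / ((k : ℝ) + 2)) • (x k - x 0) - η k • G (y (k + 1)) := by
        rw [hx]; module
      rw [hd, inner_sub_right, inner_smul_right, inner_smul_right, inner_sub_left,
        inner_sub_left] at hmo
      rw [ha, hd0, inner_sub_right, inner_smul_right, inner_smul_right, hxyn, ← mul_assoc,
        ← hmL]
      have hq2 := mul_nonneg
        (by positivity : 0 ≤ ((k : ℝ) + 1) * ((k : ℝ) + 2) * η k / 2) hq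
      have hmo2 := mul_nonneg
        (by positivity : 0 ≤ ((k : ℝ) + 1) * ((k : ℝ) + 2)) hmo
      rw [← sub_nonneg]
      refine le_trans (add_nonneg hq2 hmo2) (le_of_eq ?_)
      push_cast
      field_simp
      ring
  intro k
  have hk0 : (0 : ℝ) ≤ k := Nat.cast_nonneg k
  have hVk := hV k
  have hmo := hmono (x k) xstar
  rw [hstar, sub_zero] at hmo
  have hsplit : ⟪G (x k), x k - x 0⟫_ℝ =
      ⟪G (x k), x k - xstar⟫_ℝ - ⟪G (x k), x 0 - xstar⟫_ℝ := by
    rw [← inner_sub_right]; congr 1; abel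
  have hcs := real_inner_le_norm (G (x k)) (x 0 - xstar)
  have hηk := hηpos k
  have hsη := hle k
  -- Young's inequality
  have hyoung : ((k : ℝ) + 1) * (‖G (x k)‖ * ‖x 0 - xstar‖) ≤
      ((k : ℝ) + 1) * ((k : ℝ) + 2) * s / 4 * ‖G (x k)‖ ^ 2 + 1 / s * ‖x 0 - xstar‖ ^ 2 := by
    have h1 : 0 ≤ (((k : ℝ) + 1) * s / 2 * ‖G (x k)‖ - ‖x 0 - xstar‖) ^ 2 / s := by positivity
    have h2 : (((k : ℝ) + 1) * s / 2 * ‖G (x k)‖ - ‖x 0 - xstar‖) ^ 2 / s =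
      ((k : ℝ) + 1) ^ 2 * s / 4 * ‖G (x k)‖ ^ 2 - ((k : ℝ) + 1) * (‖G (x k)‖ * ‖x 0 - xstar‖)
        + 1 / s * ‖x 0 - xstar‖ ^ 2 := by field_simp; ring
    have h3 : 0 ≤ ((k : ℝ) + 1) * s / 4 * ‖G (x k)‖ ^ 2 := by positivity
    nlinarith
  have hmono2 : ((k : ℝ) + 1) * ((k : ℝ) + 2) * s / 2 *
      (‖G (x k)‖ ^ 2 + L ^ 2 * ‖x k - y k‖ ^ 2) ≤ ((k : ℝ) + 1) * ((k : ℝ) + 2) * η k / 2 *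
      (‖G (x k)‖ ^ 2 + L ^ 2 * ‖x k - y k‖ ^ 2) := by gcongr
  have hcs2 := mul_le_mul_of_nonneg_left hcs (by positivity : 0 ≤ (k : ℝ) + 1)
  have hmo2 := mul_nonneg (by positivity : 0 ≤ (k : ℝ) + 1) hmo
  rw [hsplit, mul_sub] at hVk
  rw [div_mul_eq_mul_div, le_div_iff₀ (by positivity)]
  linarith
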